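/- The functionals L₁(v) := √(Γ₁(v,v)) + β(v)/Area(∂K) and L₃(v) := √(Γ₃(v,v)) + β(v)/Area(∂K) are positive on ℝⁿ \ {0}, where Γᵢ = γᵢ/Area(∂K); i.e., the Randers perturbation by the 1-form β/Area(∂K) yields positive functionals. -/

import Mathlib

open MeasureTheory

/-- The Riemann–Finsler metric `g_{ij} = ∂²E/∂yʲ∂yⁱ` of the energy
`E = L²/2` of a Minkowski functional `L`. -/
noncomputable def gmet (n : ℕ) (L : (Fin n → ℝ) → ℝ) (v : Fin n → ℝ) (i j : Fin n) : ℝ :=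
  fderiv ℝ (fun u => fderiv ℝ (fun w => L w ^ 2 / 2) u (Pi.single i 1)) v (Pi.single j 1)

/-- `L` is a Finsler–Minkowski functional: positively `1`-homogeneous, positive
away from the origin, `C⁴` away from the origin, with positive definite
Hessian `gmet` of the energy `E = L²/2`. -/
def IsFinslerMinkowski (n : ℕ) (L : (Fin n → ℝ) → ℝ) : Prop :=
  (∀ v : Fin n → ℝ, v ≠ 0 → ∀ t : ℝ, 0 < t → L (t • v) = t * L v) ∧
  (∀ v : Fin n → ℝ, v ≠ 0 → 0 < L v) ∧
  (∀ v : Fin n → ℝ, v ≠ 0 → ContDiffAt ℝ 4 L v) ∧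
  (∀ v : Fin n → ℝ, v ≠ 0 → ∀ w : Fin n → ℝ, w ≠ 0 →
    0 < ∑ i, ∑ j, w i * w j * gmet n L v i j)

/-- The volume density `√(det g_{ij})`. -/
noncomputable def volDens (n : ℕ) (L : (Fin n → ℝ) → ℝ) (v : Fin n → ℝ) : ℝ :=
  Real.sqrt (Matrix.det (Matrix.of fun i j => gmet n L v i j))

/-- `γ₁(v,v) = ∫_{∂K} g(v,v) μ = n ∫_K g_u(v,v) √(det g)` (body-integral form). -/
noncomputable def gammaOne (n : ℕ) (L : (Fin n → ℝ) → ℝ) (v : Fin n → ℝ) : ℝ :=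
  n * ∫ u in {u : Fin n → ℝ | L u ≤ 1},
    (∑ i, ∑ j, v i * v j * gmet n L u i j) * volDens n L u

/-- `γ₃(v,v) = ∫_{∂K} (VL)² μ = n ∫_K (VL)² √(det g)` (body-integral form). -/
noncomputable def gammaThree (n : ℕ) (L : (Fin n → ℝ) → ℝ) (v : Fin n → ℝ) : ℝ :=
  n * ∫ u in {u : Fin n → ℝ | L u ≤ 1},
    (∑ i, v i * fderiv ℝ L u (Pi.single i 1)) ^ 2 * volDens n L u

/-- `β(v) = ∫_{∂K} VL μ = n ∫_K VL √(det g)` (body-integral form). -/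
noncomputable def betaFun (n : ℕ) (L : (Fin n → ℝ) → ℝ) (v : Fin n → ℝ) : ℝ :=
  n * ∫ u in {u : Fin n → ℝ | L u ≤ 1},
    (∑ i, v i * fderiv ℝ L u (Pi.single i 1)) * volDens n L u

/-- `Area(∂K) = ∫_{∂K} 1 μ = n ∫_K √(det g)` (body-integral form). -/
noncomputable def areaBoundary (n : ℕ) (L : (Fin n → ℝ) → ℝ) : ℝ :=
  n * ∫ u in {u : Fin n → ℝ | L u ≤ 1}, volDens n L u

/-!
The differential `dL` is positively homogeneous of degree zero, and so are the Hessian `g` of the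
energy `L² / 2` and the density `√(det g)`; hence all integrands are bounded functions of the
direction, integrable over the unit body.

Cauchy–Schwarz for the weight `√(det g)` gives `β(v)² ≤ Area · γ₃(v, v)`. It is strict because
`u ↦ dL_u(v)` is not constant: by Euler's relation it equals `L v > 0` at `u = v` and
`-L (-v) < 0` at `u = -v`. Euler's relation also gives `g_u(u, v) = L u * dL_u(v)` and
`g_u(u, u) = (L u)²`, so Cauchy–Schwarz for `g_u` reads `dL_u(v)² ≤ g_u(v, v)`, and integrating
yields `γ₃ ≤ γ₁`.
-/

section Homogeneous

variable {E F G : Type*} [NormedAddCommGroup E] [NormedSpace ℝ E]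
  [NormedAddCommGroup F] [NormedSpace ℝ F] [NormedAddCommGroup G] [NormedSpace ℝ G]

/-- Positive homogeneity of degree `k`. The value at the origin is left unconstrained, as it is for
the Minkowski functionals of this file. -/
def IsPosHomogeneous (k : ℕ) (f : E → F) : Prop :=
  ∀ ⦃u : E⦄, u ≠ 0 → ∀ ⦃t : ℝ⦄, 0 < t → f (t • u) = t ^ k • f u

namespace IsPosHomogeneous

variable {k : ℕ} {f : E → F}

protected lemma fderiv (hf : IsPosHomogeneous (k + 1) f) : IsPosHomogeneous k (fderiv ℝ f) := by
  intro u hu t ht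
  have hev : (f <| t • ·) =ᶠ[nhds u] t ^ (k + 1) • f := by
    filter_upwards [isOpen_ne.mem_nhds hu] with w hw using hf hw ht
  have hsmul : t • fderiv ℝ f (t • u) = t • t ^ k • fderiv ℝ f u := by
    rw [← fderiv_comp_smul, hev.fderiv_eq, fderiv_const_smul_field, Pi.smul_apply, smul_smul,
      pow_succ']
  exact smul_right_injective _ ht.ne' hsmul

lemma fderiv_apply_self (hf : IsPosHomogeneous k f) {u : E} (hu : u ≠ 0)
    (hd : DifferentiableAt ℝ f u) : fderiv ℝ f u u = (k : ℝ) • f u := by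
  have hray : HasDerivAt (fun t : ℝ ↦ f (t • u)) (fderiv ℝ f u u) 1 := by
    have hline : HasDerivAt (fun t : ℝ ↦ t • u) u 1 := by
      simpa using (hasDerivAt_id (1 : ℝ)).smul_const u
    exact HasFDerivAt.comp_hasDerivAt (1 : ℝ) (by simpa using hd.hasFDerivAt) hline
  have hpow : HasDerivAt (fun t : ℝ ↦ t ^ k • f u) ((k : ℝ) • f u) 1 := by
    simpa using (hasDerivAt_pow k (1 : ℝ)).smul_const (f u)
  refine hray.unique (hpow.congr_of_eventuallyEq ?_)
  filter_upwards [lt_mem_nhds one_pos] with t ht using hf hu ht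

lemma clm_apply {A : E → F →L[ℝ] G} (hA : IsPosHomogeneous k A) (v : F) :
    IsPosHomogeneous k fun u ↦ A u v :=
  fun u hu t ht ↦ by simp only [hA hu ht, smul_apply]

end IsPosHomogeneous

/-- A continuous function of the direction `u / ‖u‖` alone, viewed as a function of `u ≠ 0`. -/
structure IsDirectional (f : E → F) : Prop where
  continuousOn : ContinuousOn f {0}ᶜ
  homogeneous : IsPosHomogeneous 0 f

namespace IsDirectional

variable {f : E → F}

lemma apply_smul (hf : IsDirectional f) {u : E} (hu : u ≠ 0) {t : ℝ} (ht : 0 < t) :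
    f (t • u) = f u := by
  simpa using hf.homogeneous hu ht

lemma congr {g : E → F} (hf : IsDirectional f) (hgf : ∀ u ≠ 0, g u = f u) : IsDirectional g where
  continuousOn := hf.continuousOn.congr hgf
  homogeneous u hu t ht := by
    rw [hgf u hu, hgf _ (smul_ne_zero ht.ne' hu), hf.homogeneous hu ht]

lemma clm_apply {A : E → F →L[ℝ] G} (hA : IsDirectional A) (v : F) :
    IsDirectional fun u ↦ A u v where
  continuousOn := hA.continuousOn.clm_apply continuousOn_const
  homogeneous := hA.homogeneous.clm_apply v

lemma mul {f g : E → ℝ} (hf : IsDirectional f) (hg : IsDirectional g) :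
    IsDirectional fun u ↦ f u * g u where
  continuousOn := hf.continuousOn.mul hg.continuousOn
  homogeneous u hu t ht := by simp [hf.apply_smul hu ht, hg.apply_smul hu ht]

lemma pow {f : E → ℝ} (hf : IsDirectional f) (m : ℕ) : IsDirectional fun u ↦ f u ^ m where
  continuousOn := hf.continuousOn.pow m
  homogeneous u hu t ht := by simp [hf.apply_smul hu ht]

lemma exists_norm_le [ProperSpace E] (hf : IsDirectional f) : ∃ C, ∀ u ≠ 0, ‖f u‖ ≤ C := by
  obtain ⟨C, hC⟩ := (isCompact_sphere (0 : E) 1).exists_bound_of_continuousOn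
    (hf.continuousOn.mono fun u hu ↦ ne_zero_of_mem_unit_sphere ⟨u, hu⟩)
  refine ⟨C, fun u hu ↦ ?_⟩
  have hnorm : 0 < ‖u‖ := norm_pos_iff.2 hu
  rw [← hf.apply_smul hu (inv_pos.2 hnorm)]
  exact hC _ (by simp [norm_smul, hnorm.ne'])

end IsDirectional

end Homogeneous

section Gauge

variable {E F : Type*} [NormedAddCommGroup E] [NormedSpace ℝ E]
  [NormedAddCommGroup F] [NormedSpace ℝ F]

/-- A positive, positively `1`-homogeneous function, continuous away from the origin. Its unit body
is the sublevel set `{u | L u ≤ 1}`; convexity is not assumed. -/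
structure IsPosGauge (L : E → ℝ) : Prop where
  homogeneous : IsPosHomogeneous 1 L
  pos : ∀ u ≠ 0, 0 < L u
  continuousOn : ContinuousOn L {0}ᶜ

namespace IsPosGauge

variable {L : E → ℝ}

lemma apply_smul (hL : IsPosGauge L) {u : E} (hu : u ≠ 0) {t : ℝ} (ht : 0 < t) :
    L (t • u) = t * L u := by
  simpa using hL.homogeneous hu ht

lemma isDirectional_norm_div (hL : IsPosGauge L) : IsDirectional fun u ↦ ‖u‖ / L u where
  continuousOn := continuousOn_id.norm.div hL.continuousOn fun u hu ↦ (hL.pos u hu).ne'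
  homogeneous u hu t ht := by
    simp [hL.apply_smul hu ht, norm_smul, abs_of_pos ht, mul_div_mul_left _ _ ht.ne']

lemma isBounded_unitBody [ProperSpace E] (hL : IsPosGauge L) :
    Bornology.IsBounded {u | L u ≤ 1} := by
  obtain ⟨C, hC⟩ := hL.isDirectional_norm_div.exists_norm_le
  refine isBounded_iff_forall_norm_le.2 ⟨max C 0, fun u (hu : L u ≤ 1) ↦ ?_⟩
  rcases eq_or_ne u 0 with rfl | hu0
  · simp
  · calc ‖u‖ ≤ ‖u‖ / L u := le_div_self (norm_nonneg u) (hL.pos u hu0) hu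
      _ ≤ C := (le_abs_self _).trans (hC u hu0)
      _ ≤ max C 0 := le_max_left C 0

lemma exists_pos_smul_lt_one (hL : IsPosGauge L) {u : E} (hu : u ≠ 0) :
    ∃ t : ℝ, 0 < t ∧ L (t • u) < 1 := by
  have hLu := hL.pos u hu
  refine ⟨(2 * L u)⁻¹, by positivity, ?_⟩
  rw [hL.apply_smul hu (by positivity)]
  field_simp
  norm_num

variable [MeasurableSpace E] {μ : Measure E}

lemma eq_const_of_ae_unitBody [μ.IsOpenPosMeasure] (hL : IsPosGauge L) {f : E → F}
    (hf : IsDirectional f) {c : F} (hfc : f =ᵐ[μ.restrict {u | L u ≤ 1}] fun _ ↦ c) {u : E}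
    (hu : u ≠ 0) : f u = c := by
  let U : Set E := {0}ᶜ ∩ L ⁻¹' Set.Iio 1
  have hU : IsOpen U := hL.continuousOn.isOpen_inter_preimage isOpen_compl_singleton isOpen_Iio
  have hU_sub : U ⊆ {u | L u ≤ 1} := fun w ⟨_, (hw : L w < 1)⟩ ↦ hw.le
  have heq : Set.EqOn f (fun _ ↦ c) U :=
    Measure.eqOn_open_of_ae_eq (ae_restrict_of_ae_restrict_of_subset hU_sub hfc) hU
      (hf.continuousOn.mono Set.inter_subset_left) continuousOn_const
  obtain ⟨t, ht, htu⟩ := hL.exists_pos_smul_lt_one hu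
  rw [← hf.apply_smul hu ht]
  exact heq ⟨smul_ne_zero ht.ne' hu, htu⟩

lemma integrableOn_unitBody [ProperSpace E] [OpensMeasurableSpace E] [IsFiniteMeasureOnCompacts μ]
    [NullSingletonClass μ] (hL : IsPosGauge L) {f : E → F} (hf : IsDirectional f) :
    IntegrableOn f {u | L u ≤ 1} μ := by
  obtain ⟨C, hC⟩ := hf.exists_norm_le
  refine .of_bound hL.isBounded_unitBody.measure_lt_top ?_ C ?_
  · have hmeas := hf.continuousOn.aestronglyMeasurable (μ := μ) (measurableSet_singleton 0).compl
    rw [restrict_compl_singleton] at hmeas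
    exact hmeas.restrict
  · filter_upwards [Measure.ae_ne _ 0] with u hu using hC u hu

end IsPosGauge

end Gauge

section CauchySchwarz

variable {α : Type*} [MeasurableSpace α] {ν : Measure α} {f ρ : α → ℝ}

lemma integrable_sq_sub_const_mul (hρ : Integrable ρ ν)
    (hfρ : Integrable (fun x ↦ f x * ρ x) ν) (hf2ρ : Integrable (fun x ↦ f x ^ 2 * ρ x) ν) (c : ℝ) :
    Integrable (fun x ↦ (f x - c) ^ 2 * ρ x) ν := by
  refine ((hf2ρ.sub (hfρ.const_mul (2 * c))).add (hρ.const_mul (c ^ 2))).congr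
    (.of_forall fun x ↦ ?_)
  simp only [Pi.add_apply, Pi.sub_apply]
  ring

lemma integral_sq_sub_const_mul (hρ : Integrable ρ ν) (hfρ : Integrable (fun x ↦ f x * ρ x) ν)
    (hf2ρ : Integrable (fun x ↦ f x ^ 2 * ρ x) ν) (c : ℝ) :
    ∫ x, (f x - c) ^ 2 * ρ x ∂ν =
      ∫ x, f x ^ 2 * ρ x ∂ν - 2 * c * ∫ x, f x * ρ x ∂ν + c ^ 2 * ∫ x, ρ x ∂ν := by
  have hexpand (x : α) :
      (f x - c) ^ 2 * ρ x = f x ^ 2 * ρ x - 2 * c * (f x * ρ x) + c ^ 2 * ρ x := by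
    ring
  simp only [hexpand]
  rw [integral_add (by exact hf2ρ.sub (hfρ.const_mul _)) (hρ.const_mul _),
    integral_sub hf2ρ (hfρ.const_mul _), integral_const_mul, integral_const_mul]

lemma integral_sq_sub_const_mul_pos (hρ_pos : ∀ᵐ x ∂ν, 0 < ρ x) {c : ℝ}
    (hint : Integrable (fun x ↦ (f x - c) ^ 2 * ρ x) ν) (hf : ¬ f =ᵐ[ν] fun _ ↦ c) :
    0 < ∫ x, (f x - c) ^ 2 * ρ x ∂ν := by
  have hnonneg : 0 ≤ᵐ[ν] fun x ↦ (f x - c) ^ 2 * ρ x := by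
    filter_upwards [hρ_pos] with x hx using by positivity
  refine (integral_nonneg_of_ae hnonneg).lt_of_ne' fun hzero ↦ hf ?_
  filter_upwards [(integral_eq_zero_iff_of_nonneg_ae hnonneg hint).1 hzero, hρ_pos] with x hx hρx
  simpa [hρx.ne', sub_eq_zero] using hx

theorem sq_integral_mul_lt_of_not_ae_const (hρ_pos : ∀ᵐ x ∂ν, 0 < ρ x) (hρ : Integrable ρ ν)
    (hfρ : Integrable (fun x ↦ f x * ρ x) ν) (hf2ρ : Integrable (fun x ↦ f x ^ 2 * ρ x) ν)
    (hf : ∀ c, ¬ f =ᵐ[ν] fun _ ↦ c) :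
    (∫ x, f x * ρ x ∂ν) ^ 2 < (∫ x, ρ x ∂ν) * ∫ x, f x ^ 2 * ρ x ∂ν := by
  set a := ∫ x, ρ x ∂ν
  set b := ∫ x, f x * ρ x ∂ν
  have ha : 0 < a := by
    have hρ_nonneg : 0 ≤ᵐ[ν] ρ := hρ_pos.mono fun _ ↦ le_of_lt
    refine (integral_nonneg_of_ae hρ_nonneg).lt_of_ne' fun hzero ↦ hf 0 ?_
    filter_upwards [(integral_eq_zero_iff_of_nonneg_ae hρ_nonneg hρ).1 hzero, hρ_pos]
      with x hx hρx using absurd hx hρx.ne'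
  have hvar : 0 < ∫ x, f x ^ 2 * ρ x ∂ν - 2 * (b / a) * b + (b / a) ^ 2 * a := by
    rw [← integral_sq_sub_const_mul hρ hfρ hf2ρ]
    exact integral_sq_sub_const_mul_pos hρ_pos (integrable_sq_sub_const_mul hρ hfρ hf2ρ _) (hf _)
  have hmul := mul_pos ha hvar
  field_simp at hmul
  linarith

end CauchySchwarz

section Minkowski

variable {E : Type*} [NormedAddCommGroup E] [NormedSpace ℝ E]

/-- The energy `L² / 2` of a Minkowski functional. -/
noncomputable def energy (L : E → ℝ) (u : E) : ℝ := L u ^ 2 / 2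

/-- The fundamental form `g_u`, the Hessian of the energy at `u`, in coordinate-free form. -/
noncomputable def fundamentalForm (L : E → ℝ) (u : E) : E →L[ℝ] E →L[ℝ] ℝ :=
  fderiv ℝ (fderiv ℝ (energy L)) u

variable {L : E → ℝ} {u : E}

lemma fderiv_energy (hd : DifferentiableAt ℝ L u) :
    fderiv ℝ (energy L) u = L u • fderiv ℝ L u := by
  have h : HasFDerivAt (energy L) _ u := (hd.hasFDerivAt.pow 2).mul_const (2 : ℝ)⁻¹
  rw [h.fderiv, smul_smul]
  simp

lemma contDiffAt_energy {m : WithTop ℕ∞} (hL : ContDiffAt ℝ m L u) :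
    ContDiffAt ℝ m (energy L) u :=
  (hL.pow 2).div_const 2

lemma differentiableAt_fderiv_energy (hL : ContDiffAt ℝ 2 L u) :
    DifferentiableAt ℝ (fderiv ℝ (energy L)) u :=
  ((contDiffAt_energy hL).fderiv_right (m := 1) (by norm_num)).differentiableAt one_ne_zero

lemma fundamentalForm_comm (hL : ContDiffAt ℝ 2 L u) (v w : E) :
    fundamentalForm L u v w = fundamentalForm L u w v :=
  (contDiffAt_energy hL).isSymmSndFDerivAt (by simp) v w

lemma continuousAt_fundamentalForm (hL : ContDiffAt ℝ 2 L u) :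
    ContinuousAt (fundamentalForm L) u :=
  (((contDiffAt_energy hL).fderiv_right (m := 1) (by norm_num)).fderiv_right (m := 0)
    (by norm_num)).continuousAt

namespace IsPosHomogeneous

protected lemma energy (hL : IsPosHomogeneous 1 L) : IsPosHomogeneous 2 (energy L) := by
  intro u hu t ht
  simp only [energy, hL hu ht, smul_eq_mul]
  ring

protected lemma fundamentalForm (hL : IsPosHomogeneous 1 L) :
    IsPosHomogeneous 0 (fundamentalForm L) :=
  hL.energy.fderiv.fderiv

end IsPosHomogeneous

/-- A Minkowski functional of class `C²` on a normed space: positive, positively `1`-homogeneous,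
with positive definite fundamental form. -/
structure IsMinkowskiFunctional (L : E → ℝ) : Prop where
  homogeneous : IsPosHomogeneous 1 L
  pos : ∀ u ≠ 0, 0 < L u
  contDiffAt : ∀ u ≠ 0, ContDiffAt ℝ 2 L u
  fundamentalForm_pos : ∀ u ≠ 0, ∀ w ≠ 0, 0 < fundamentalForm L u w w

namespace IsMinkowskiFunctional

lemma isPosGauge (hL : IsMinkowskiFunctional L) : IsPosGauge L where
  homogeneous := hL.homogeneous
  pos := hL.pos
  continuousOn u hu := (hL.contDiffAt u hu).continuousAt.continuousWithinAt

lemma differentiableAt (hL : IsMinkowskiFunctional L) (hu : u ≠ 0) : DifferentiableAt ℝ L u :=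
  (hL.contDiffAt u hu).differentiableAt two_ne_zero

lemma isDirectional_fderiv (hL : IsMinkowskiFunctional L) : IsDirectional (fderiv ℝ L) where
  continuousOn u hu := ((hL.contDiffAt u hu).fderiv_right (m := 1)
    (by norm_num)).continuousAt.continuousWithinAt
  homogeneous := hL.homogeneous.fderiv

lemma isDirectional_fundamentalForm (hL : IsMinkowskiFunctional L) :
    IsDirectional (fundamentalForm L) where
  continuousOn u hu := (continuousAt_fundamentalForm (hL.contDiffAt u hu)).continuousWithinAt
  homogeneous := hL.homogeneous.fundamentalForm

lemma fderiv_apply_self (hL : IsMinkowskiFunctional L) (hu : u ≠ 0) : fderiv ℝ L u u = L u := by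
  simpa using hL.homogeneous.fderiv_apply_self hu (hL.differentiableAt hu)

lemma fundamentalForm_self_apply (hL : IsMinkowskiFunctional L) (hu : u ≠ 0) (v : E) :
    fundamentalForm L u u v = L u * fderiv ℝ L u v := by
  have heuler : fundamentalForm L u u = fderiv ℝ (energy L) u := by
    simpa [fundamentalForm] using hL.homogeneous.energy.fderiv.fderiv_apply_self hu
      (differentiableAt_fderiv_energy (hL.contDiffAt u hu))
  simp [heuler, fderiv_energy (hL.differentiableAt hu)]

lemma fundamentalForm_nonneg (hL : IsMinkowskiFunctional L) (hu : u ≠ 0) (w : E) :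
    0 ≤ fundamentalForm L u w w := by
  rcases eq_or_ne w 0 with rfl | hw
  · simp
  · exact (hL.fundamentalForm_pos u hu w hw).le

lemma sq_fderiv_le_fundamentalForm (hL : IsMinkowskiFunctional L) (hu : u ≠ 0) (v : E) :
    fderiv ℝ L u v ^ 2 ≤ fundamentalForm L u v v := by
  have hcs : fundamentalForm L u u v ^ 2 ≤ fundamentalForm L u u u * fundamentalForm L u v v :=
    LinearMap.BilinForm.apply_sq_le_of_symm (fundamentalForm L u).toBilinForm
      (hL.fundamentalForm_nonneg hu) ⟨fundamentalForm_comm (hL.contDiffAt u hu)⟩ u v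
  rw [hL.fundamentalForm_self_apply hu, hL.fundamentalForm_self_apply hu, hL.fderiv_apply_self hu,
    mul_pow, ← sq] at hcs
  exact le_of_mul_le_mul_left hcs (pow_pos (hL.pos u hu) 2)

variable [MeasurableSpace E] {μ : Measure E}

lemma not_ae_const_fderiv [μ.IsOpenPosMeasure] (hL : IsMinkowskiFunctional L) {v : E} (hv : v ≠ 0)
    (c : ℝ) : ¬ (fun u ↦ fderiv ℝ L u v) =ᵐ[μ.restrict {u | L u ≤ 1}] fun _ ↦ c := by
  intro hc
  have hconst {u : E} (hu : u ≠ 0) : fderiv ℝ L u v = c :=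
    hL.isPosGauge.eq_const_of_ae_unitBody (hL.isDirectional_fderiv.clm_apply v) hc hu
  have hnv : -v ≠ 0 := neg_ne_zero.2 hv
  have hpos : 0 < c := by
    rw [← hconst hv, hL.fderiv_apply_self hv]
    exact hL.pos v hv
  have hneg : 0 < -c := by
    rw [← hconst hnv, ← map_neg, hL.fderiv_apply_self hnv]
    exact hL.pos (-v) hnv
  linarith

variable [ProperSpace E] [OpensMeasurableSpace E] [IsFiniteMeasureOnCompacts μ]
  [NullSingletonClass μ] {ρ : E → ℝ}

theorem sq_setIntegral_fderiv_lt [μ.IsOpenPosMeasure] (hL : IsMinkowskiFunctional L)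
    (hρ : IsDirectional ρ) (hρ_pos : ∀ u ≠ 0, 0 < ρ u) {v : E} (hv : v ≠ 0) :
    (∫ u in {u | L u ≤ 1}, fderiv ℝ L u v * ρ u ∂μ) ^ 2 <
      (∫ u in {u | L u ≤ 1}, ρ u ∂μ) * ∫ u in {u | L u ≤ 1}, fderiv ℝ L u v ^ 2 * ρ u ∂μ := by
  have hdL := hL.isDirectional_fderiv.clm_apply v
  refine sq_integral_mul_lt_of_not_ae_const ?_ (hL.isPosGauge.integrableOn_unitBody hρ)
    (hL.isPosGauge.integrableOn_unitBody (hdL.mul hρ))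
    (hL.isPosGauge.integrableOn_unitBody ((hdL.pow 2).mul hρ)) (hL.not_ae_const_fderiv hv)
  filter_upwards [Measure.ae_ne _ 0] with u hu using hρ_pos u hu

theorem setIntegral_sq_fderiv_le (hL : IsMinkowskiFunctional L) (hρ : IsDirectional ρ)
    (hρ_nonneg : ∀ u ≠ 0, 0 ≤ ρ u) (v : E) :
    ∫ u in {u | L u ≤ 1}, fderiv ℝ L u v ^ 2 * ρ u ∂μ ≤
      ∫ u in {u | L u ≤ 1}, fundamentalForm L u v v * ρ u ∂μ := by
  have hdL := hL.isDirectional_fderiv.clm_apply v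
  have hg := (hL.isDirectional_fundamentalForm.clm_apply v).clm_apply v
  refine integral_mono_ae (hL.isPosGauge.integrableOn_unitBody ((hdL.pow 2).mul hρ))
    (hL.isPosGauge.integrableOn_unitBody (hg.mul hρ)) ?_
  filter_upwards [Measure.ae_ne _ 0] with u hu
  exact mul_le_mul_of_nonneg_right (hL.sq_fderiv_le_fundamentalForm hu v) (hρ_nonneg u hu)

end IsMinkowskiFunctional

end Minkowski

section Coordinates

variable {n : ℕ} {L : (Fin n → ℝ) → ℝ} {u v : Fin n → ℝ}

lemma sum_mul_clm_apply_single {ι : Type*} [Fintype ι] [DecidableEq ι] (A : (ι → ℝ) →L[ℝ] ℝ)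
    (v : ι → ℝ) :
    ∑ i, v i * A (Pi.single i 1) = A v := by
  conv_rhs => rw [pi_eq_sum_univ' v]
  simp [map_sum]

lemma gmet_eq_fundamentalForm (hL : ContDiffAt ℝ 2 L u) (i j : Fin n) :
    gmet n L u i j = fundamentalForm L u (Pi.single j 1) (Pi.single i 1) := by
  change fderiv ℝ (fun w ↦ fderiv ℝ (energy L) w (Pi.single i 1)) u (Pi.single j 1) = _
  rw [fderiv_clm_apply (differentiableAt_fderiv_energy hL) (differentiableAt_const _)]
  simp [fundamentalForm]

lemma sum_gmet_eq_fundamentalForm (hL : ContDiffAt ℝ 2 L u) (v : Fin n → ℝ) :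
    ∑ i, ∑ j, v i * v j * gmet n L u i j = fundamentalForm L u v v := by
  calc ∑ i, ∑ j, v i * v j * gmet n L u i j
      = ∑ i, v i * ∑ j, v j * (fundamentalForm L u).flip (Pi.single i 1) (Pi.single j 1) := by
        simp only [gmet_eq_fundamentalForm hL, Finset.mul_sum, mul_assoc,
          ContinuousLinearMap.flip_apply]
    _ = fundamentalForm L u v v := by
        rw [← sum_mul_clm_apply_single (fundamentalForm L u v) v]
        exact Finset.sum_congr rfl fun i _ ↦ by rw [sum_mul_clm_apply_single]; rfl

lemma IsFinslerMinkowski.isMinkowskiFunctional (hL : IsFinslerMinkowski n L) :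
    IsMinkowskiFunctional L := by
  obtain ⟨homogeneous, pos, contDiffAt, hessian_pos⟩ := hL
  have hC2 (u : Fin n → ℝ) (hu : u ≠ 0) : ContDiffAt ℝ 2 L u :=
    (contDiffAt u hu).of_le (by norm_num)
  exact
    { homogeneous := fun u hu t ht ↦ by simpa using homogeneous u hu t ht
      pos := pos
      contDiffAt := hC2
      fundamentalForm_pos := fun u hu w hw ↦ by
        simpa only [sum_gmet_eq_fundamentalForm (hC2 u hu)] using hessian_pos u hu w hw }

lemma areaBoundary_nonneg (n : ℕ) (L : (Fin n → ℝ) → ℝ) : 0 ≤ areaBoundary n L :=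
  mul_nonneg n.cast_nonneg (integral_nonneg fun _ ↦ Real.sqrt_nonneg _)

namespace IsMinkowskiFunctional

lemma posDef_gmet (hL : IsMinkowskiFunctional L) (hu : u ≠ 0) :
    (Matrix.of fun i j ↦ gmet n L u i j).PosDef := by
  have hC2 := hL.contDiffAt u hu
  refine .of_dotProduct_mulVec_pos ?_ fun w hw ↦ ?_
  · ext i j
    simp [gmet_eq_fundamentalForm hC2, fundamentalForm_comm hC2 (Pi.single i 1)]
  · have hpos := hL.fundamentalForm_pos u hu w hw
    rw [← sum_gmet_eq_fundamentalForm hC2] at hpos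
    simpa [dotProduct, Matrix.mulVec, Finset.mul_sum, mul_assoc, mul_comm, mul_left_comm] using hpos

lemma volDens_pos (hL : IsMinkowskiFunctional L) (hu : u ≠ 0) : 0 < volDens n L u :=
  Real.sqrt_pos.2 (hL.posDef_gmet hu).det_pos

lemma isDirectional_gmet (hL : IsMinkowskiFunctional L) (i j : Fin n) :
    IsDirectional fun u ↦ gmet n L u i j :=
  ((hL.isDirectional_fundamentalForm.clm_apply (Pi.single j 1)).clm_apply (Pi.single i 1)).congr
    fun u hu ↦ gmet_eq_fundamentalForm (hL.contDiffAt u hu) i j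

lemma isDirectional_volDens (hL : IsMinkowskiFunctional L) : IsDirectional (volDens n L) where
  continuousOn := by
    refine Real.continuous_sqrt.comp_continuousOn (continuous_id.matrix_det.comp_continuousOn ?_)
    exact continuousOn_pi.2 fun i ↦ continuousOn_pi.2 fun j ↦
      (hL.isDirectional_gmet i j).continuousOn
  homogeneous u hu t ht := by
    simp [volDens, (hL.isDirectional_gmet _ _).apply_smul hu ht]

theorem sq_betaFun_lt (hL : IsMinkowskiFunctional L) (hv : v ≠ 0) :
    betaFun n L v ^ 2 < areaBoundary n L * gammaThree n L v := by
  have hn : n ≠ 0 := by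
    rintro rfl
    exact hv (Subsingleton.elim v 0)
  have : NeZero n := ⟨hn⟩
  have hcs := hL.sq_setIntegral_fderiv_lt (μ := volume) hL.isDirectional_volDens
    (fun _ ↦ hL.volDens_pos) hv
  have hn2 : (0 : ℝ) < (n : ℝ) ^ 2 := by positivity
  simp only [betaFun, areaBoundary, gammaThree, sum_mul_clm_apply_single]
  linarith [mul_lt_mul_of_pos_left hcs hn2]

theorem gammaThree_le_gammaOne (hL : IsMinkowskiFunctional L) (v : Fin n → ℝ) :
    gammaThree n L v ≤ gammaOne n L v := by
  rcases eq_or_ne n 0 with rfl | hn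
  · simp [gammaThree, gammaOne]
  have : NeZero n := ⟨hn⟩
  have hquad : ∫ u in {u | L u ≤ 1}, (∑ i, ∑ j, v i * v j * gmet n L u i j) * volDens n L u =
      ∫ u in {u | L u ≤ 1}, fundamentalForm L u v v * volDens n L u := by
    refine integral_congr_ae ?_
    filter_upwards [Measure.ae_ne _ 0] with u hu
    rw [sum_gmet_eq_fundamentalForm (hL.contDiffAt u hu)]
  simp only [gammaThree, gammaOne, sum_mul_clm_apply_single, hquad]
  exact mul_le_mul_of_nonneg_left (hL.setIntegral_sq_fderiv_le hL.isDirectional_volDens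
    (fun u hu ↦ (hL.volDens_pos hu).le) v) n.cast_nonneg

end IsMinkowskiFunctional

end Coordinates

lemma sqrt_div_add_div_pos {a b c : ℝ} (ha : 0 ≤ a) (h : b ^ 2 < a * c) :
    0 < √(c / a) + b / a := by
  have ha' : 0 < a := ha.lt_of_ne' <| by
    rintro rfl
    exact absurd h (by simpa using sq_nonneg b)
  have hsq : (-(b / a)) ^ 2 < c / a := by
    rw [neg_sq, div_pow, div_lt_div_iff₀ (by positivity) ha']
    nlinarith
  linarith [Real.lt_sqrt_of_sq_lt hsq]

theorem associated_randers_functionals_positive_general {n : ℕ} {L : (Fin n → ℝ) → ℝ}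
    (hL : IsMinkowskiFunctional L) {v : Fin n → ℝ} (hv : v ≠ 0) :
    0 < √(gammaOne n L v / areaBoundary n L) + betaFun n L v / areaBoundary n L ∧
    0 < √(gammaThree n L v / areaBoundary n L) + betaFun n L v / areaBoundary n L := by
  have harea := areaBoundary_nonneg n L
  have hthree : betaFun n L v ^ 2 < areaBoundary n L * gammaThree n L v := hL.sq_betaFun_lt hv
  have hone : betaFun n L v ^ 2 < areaBoundary n L * gammaOne n L v :=
    hthree.trans_le (mul_le_mul_of_nonneg_left (hL.gammaThree_le_gammaOne v) harea)
  exact ⟨sqrt_div_add_div_pos harea hone, sqrt_div_add_div_pos harea hthree⟩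

/-- the associated Randers–Minkowski functionals
`L₁(v) = √(Γ₁(v,v)) + β(v)/Area(∂K)` and `L₃(v) = √(Γ₃(v,v)) + β(v)/Area(∂K)`
(with `Γᵢ = γᵢ/Area(∂K)`) are positive on `ℝⁿ \ {0}`. -/
theorem associated_randers_functionals_positive
    (n : ℕ) (L : (Fin n → ℝ) → ℝ) (hL : IsFinslerMinkowski n L)
    (v : Fin n → ℝ) (hv : v ≠ 0) :
    0 < Real.sqrt (gammaOne n L v / areaBoundary n L) + betaFun n L v / areaBoundary n L ∧
    0 < Real.sqrt (gammaThree n L v / areaBoundary n L) + betaFun n L v / areaBoundary n L := by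
  exact associated_randers_functionals_positive_general hL.isMinkowskiFunctional hv
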